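/- arXiv:1505.04985 — 3 statements merged into one kernel-verified Lean document; each statement's English description precedes it below -/
import Mathlib

section
/- For every finite index set I, the equation D2: α(Σ_{i∈I} τx_i + y) ≈ Σ_{i∈I} αx_i + α(Σ_{i∈I} x_i + y) is derivable from A1–4 + WIF1 + WIF2. -/
/-!
For a single summand, WIF2 followed by WIF1 gives
`α(τx + y) ≈ α(τx + τ(x + y)) ≈ αx + α(x + y)`.
The general case is an induction on the list of summands, for all `y` at once: the single-summand
law peels off the first `τx` and leaves `α(x + (Σ τxᵢ + y))`, to which the induction hypothesis
applies with `x + y` in place of `y`.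
-/

/-- BCCS terms over concrete actions `A` (with `none` playing the role of the
hidden action τ) and variables `V`. -/
inductive Tm (A V : Type) : Type
  | nil : Tm A V
  | var : V → Tm A V
  | plus : Tm A V → Tm A V → Tm A V
  | pre : Option A → Tm A V → Tm A V

namespace Tm

variable {A V : Type}

/-- The operational semantics of BCCS. -/
inductive Step : Tm A V → Option A → Tm A V → Prop
  | pre (α : Option A) (t : Tm A V) : Step (.pre α t) α t
  | plusL {t : Tm A V} {α : Option A} {t' : Tm A V} (u : Tm A V) :
      Step t α t' → Step (.plus t u) α t'
  | plusR (t : Tm A V) {u : Tm A V} {α : Option A} {u' : Tm A V} :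
      Step u α u' → Step (.plus t u) α u'

/-- `⇒` : the reflexive-transitive closure of τ-steps. -/
def WTau : Tm A V → Tm A V → Prop := Relation.ReflTransGen (fun t u => Step t none u)

/-- Strong (concrete) traces leading to a state. -/
inductive TraceTo : Tm A V → List A → Tm A V → Prop
  | refl (t : Tm A V) : TraceTo t [] t
  | act {t : Tm A V} {a : A} {t' : Tm A V} {w : List A} {u : Tm A V} :
      Step t (some a) t' → TraceTo t' w u → TraceTo t (a :: w) u

/-- Weak traces leading to a state (τ-steps are skipped). -/
inductive WTraceTo : Tm A V → List A → Tm A V → Prop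
  | refl (t : Tm A V) : WTraceTo t [] t
  | tau {t t' : Tm A V} {w : List A} {u : Tm A V} :
      Step t none t' → WTraceTo t' w u → WTraceTo t w u
  | act {t : Tm A V} {a : A} {t' : Tm A V} {w : List A} {u : Tm A V} :
      Step t (some a) t' → WTraceTo t' w u → WTraceTo t (a :: w) u

/-- The set of (strong) traces of a term. -/
def T (t : Tm A V) : Set (List A) := {w | ∃ t', TraceTo t w t'}

/-- The set of weak traces of a term. -/
def WT (t : Tm A V) : Set (List A) := {w | ∃ t', WTraceTo t w t'}

/-- `(w, B)` is an impossible future of `t`. -/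
def ImpFut (t : Tm A V) (w : List A) (B : Set (List A)) : Prop :=
  ∃ t', TraceTo t w t' ∧ ∀ s ∈ T t', s ∉ B

/-- `(w, B)` is a weak impossible future of `t`. -/
def WImpFut (t : Tm A V) (w : List A) (B : Set (List A)) : Prop :=
  ∃ t', WTraceTo t w t' ∧ ∀ s ∈ WT t', s ∉ B

/-- The (concrete) impossible futures preorder. -/
def IFle (p q : Tm A V) : Prop := ∀ w B, ImpFut p w B → ImpFut q w B

/-- (Concrete) impossible futures equivalence. -/
def IFeq (p q : Tm A V) : Prop := IFle p q ∧ IFle q p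

/-- The weak impossible futures preorder. -/
def WIFle (p q : Tm A V) : Prop :=
  (∀ w B, WImpFut p w B → WImpFut q w B) ∧ (WT p = WT q) ∧
  ((∃ p', Step p none p') → ∃ q', Step q none q')

/-- Weak impossible futures equivalence. -/
def WIFeq (p q : Tm A V) : Prop := WIFle p q ∧ WIFle q p

/-- The variables occurring in a term. -/
def vars : Tm A V → Set V
  | nil => ∅
  | var x => {x}
  | plus t u => vars t ∪ vars u
  | pre _ t => vars t

/-- A term is closed if it contains no variables. -/
def Closed (t : Tm A V) : Prop := vars t = ∅

/-- Substitution. -/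
def subst (σ : V → Tm A V) : Tm A V → Tm A V
  | nil => nil
  | var x => σ x
  | plus t u => plus (subst σ t) (subst σ u)
  | pre α t => pre α (subst σ t)

/-- A closed substitution. -/
def ClosedSub (σ : V → Tm A V) : Prop := ∀ x, Closed (σ x)

/-- A BCCSP term: one containing no occurrence of the τ prefix. -/
def NoTau : Tm A V → Prop
  | nil => True
  | var _ => True
  | plus t u => NoTau t ∧ NoTau u
  | pre none _ => False
  | pre (some _) t => NoTau t

/-- The variables occurring initially (outside all prefixes). -/
def initVars : Tm A V → Set V
  | nil => ∅
  | var x => {x}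
  | plus t u => initVars t ∪ initVars u
  | pre _ _ => ∅

/-- The variables having a non-initial occurrence (under some prefix). -/
def deepVars : Tm A V → Set V
  | nil => ∅
  | var _ => ∅
  | plus t u => deepVars t ∪ deepVars u
  | pre _ t => vars t

/-- A term is safe if no variable occurs both initially and non-initially. -/
def Safe (t : Tm A V) : Prop := initVars t ∩ deepVars t = ∅

/-- `init-τ` : rename all initial prefixes into τ. -/
def initTau : Tm A V → Tm A V
  | nil => nil
  | var x => var x
  | plus t u => plus (initTau t) (initTau u)
  | pre _ t => pre none t

/-- The weak depth of a term (τ-prefixes are not counted). -/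
def wdepth : Tm A V → ℕ
  | nil => 0
  | var _ => 0
  | plus t u => max (wdepth t) (wdepth u)
  | pre none t => wdepth t
  | pre (some _) t => wdepth t + 1

/-- `n`-fold prefixing with the action `a`. -/
def npre (a : A) : ℕ → Tm A V → Tm A V
  | 0, t => t
  | n + 1, t => pre (some a) (npre a n t)

/-- Finite sums of terms. -/
def listSum : List (Tm A V) → Tm A V
  | [] => nil
  | t :: l => plus t (listSum l)

/-- Weak traces ending in a variable: `(w, x) ∈ WTV t` iff `t` can weakly perform
`w` and reach a term in which `x` occurs initially. -/
def WTV (t : Tm A V) : Set (List A × V) :=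
  {wx | ∃ t', WTraceTo t wx.1 t' ∧ wx.2 ∈ initVars t'}

/-- The axioms A1-4 + WIF1 + WIF2 (as schemas, i.e. closed under instantiation). -/
inductive AX : Tm A V → Tm A V → Prop
  | A1 (t u : Tm A V) : AX (.plus t u) (.plus u t)
  | A2 (t u v : Tm A V) : AX (.plus (.plus t u) v) (.plus t (.plus u v))
  | A3 (t : Tm A V) : AX (.plus t t) t
  | A4 (t : Tm A V) : AX (.plus t .nil) t
  | WIF1 (α : Option A) (t u : Tm A V) :
      AX (.pre α (.plus (.pre none t) (.pre none u))) (.plus (.pre α t) (.pre α u))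
  | WIF2 (t u : Tm A V) :
      AX (.plus (.pre none t) u) (.plus (.pre none t) (.pre none (.plus t u)))

/-- Equational derivability from an axiomatization `E`. -/
inductive Deriv (E : Tm A V → Tm A V → Prop) : Tm A V → Tm A V → Prop
  | ax {t u : Tm A V} : E t u → Deriv E t u
  | inst {t u : Tm A V} (σ : V → Tm A V) : E t u → Deriv E (subst σ t) (subst σ u)
  | refl (t : Tm A V) : Deriv E t t
  | symm {t u : Tm A V} : Deriv E t u → Deriv E u t
  | trans {t u v : Tm A V} : Deriv E t u → Deriv E u v → Deriv E t v
  | pre (α : Option A) {t u : Tm A V} : Deriv E t u → Deriv E (.pre α t) (.pre α u)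
  | plus {t u t' u' : Tm A V} :
      Deriv E t t' → Deriv E u u' → Deriv E (.plus t u) (.plus t' u')

/-- Inequational derivability from an axiomatization `E` (no symmetry). -/
inductive IDeriv (E : Tm A V → Tm A V → Prop) : Tm A V → Tm A V → Prop
  | ax {t u : Tm A V} : E t u → IDeriv E t u
  | inst {t u : Tm A V} (σ : V → Tm A V) : E t u → IDeriv E (subst σ t) (subst σ u)
  | refl (t : Tm A V) : IDeriv E t t
  | trans {t u v : Tm A V} : IDeriv E t u → IDeriv E u v → IDeriv E t v
  | pre (α : Option A) {t u : Tm A V} : IDeriv E t u → IDeriv E (.pre α t) (.pre α u)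
  | plus {t u t' u' : Tm A V} :
      IDeriv E t t' → IDeriv E u u' → IDeriv E (.plus t u) (.plus t' u')

end Tm

namespace Tm

theorem Deriv.plus_comm {A V : Type} (t u : Tm A V) : Deriv AX (.plus t u) (.plus u t) :=
  .ax (.A1 t u)

theorem Deriv.plus_assoc {A V : Type} (t u v : Tm A V) :
    Deriv AX (.plus (.plus t u) v) (.plus t (.plus u v)) :=
  .ax (.A2 t u v)

theorem Deriv.nil_plus {A V : Type} (t : Tm A V) : Deriv AX (.plus .nil t) t :=
  (Deriv.plus_comm _ _).trans (.ax (.A4 t))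

theorem Deriv.plus_left_comm {A V : Type} (t u v : Tm A V) :
    Deriv AX (.plus t (.plus u v)) (.plus u (.plus t v)) :=
  (Deriv.plus_assoc t u v).symm.trans
    (((Deriv.plus_comm t u).plus (.refl v)).trans (Deriv.plus_assoc u t v))

/-- The single-summand case of D2. -/
theorem Deriv.pre_tau_plus {A V : Type} (α : Option A) (x y : Tm A V) :
    Deriv AX (.pre α (.plus (.pre none x) y)) (.plus (.pre α x) (.pre α (.plus x y))) :=
  (Deriv.pre α (.ax (.WIF2 x y))).trans (.ax (.WIF1 α x (.plus x y)))

end Tm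

/-- D2 `α(Σ_{i∈I} τx_i + y) ≈ Σ_{i∈I} αx_i + α(Σ_{i∈I} x_i + y)`
is derivable from A1-4 + WIF1 + WIF2, for every finite index set (here: list). -/
theorem stmt1 {A V : Type} (α : Option A) (xs : List (Tm A V)) (y : Tm A V) :
    Tm.Deriv Tm.AX
      (.pre α (.plus (Tm.listSum (xs.map (fun x => Tm.pre none x))) y))
      (.plus (Tm.listSum (xs.map (fun x => Tm.pre α x)))
             (.pre α (.plus (Tm.listSum xs) y))) := by
  induction xs generalizing y with
  | nil =>
    exact (Tm.Deriv.nil_plus _).symm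
  | cons x l ih =>
    simp only [List.map_cons, Tm.listSum]
    refine (Tm.Deriv.pre α (Tm.Deriv.plus_assoc _ _ _)).trans ?_
    refine (Tm.Deriv.pre_tau_plus α x _).trans ?_
    refine Tm.Deriv.trans ?_ (Tm.Deriv.plus_assoc _ _ _).symm
    refine Tm.Deriv.plus (.refl _) ?_
    refine (Tm.Deriv.pre α (Tm.Deriv.plus_left_comm _ _ _)).trans ((ih (.plus x y)).trans ?_)
    refine Tm.Deriv.plus (.refl _) (Tm.Deriv.pre α ?_)
    exact (Tm.Deriv.plus_left_comm _ _ _).trans (Tm.Deriv.plus_assoc _ _ _).symm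
end

section
/- Every BCCS term t with t not having a τ-transition (no summand of the form τt') can be proved equal, from A1–4 + WIF1 + WIF2, to a BCCSP term (a term containing no occurrence of the prefix operator τ). -/
namespace Tm

variable {A V : Type}

/-- Nonempty sums, bracketed arbitrarily, of terms `τs` with `s` a BCCSP term. -/
inductive TauSum : Tm A V → Prop
  | single {s : Tm A V} : NoTau s → TauSum (.pre none s)
  | plus {t u : Tm A V} : TauSum t → TauSum u → TauSum (.plus t u)

/-- The instance `t = u` of WIF1, simplified by idempotence: the law `ατt ≈ αt` of CCS. -/
theorem deriv_pre_tau (α : Option A) (t : Tm A V) :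
    Deriv AX (.pre α (.pre none t)) (.pre α t) :=
  .trans (.pre α (.symm (.ax (.A3 _)))) (.trans (.ax (.WIF1 α t t)) (.ax (.A3 _)))

theorem TauSum.tau_absorb {t : Tm A V} (ht : TauSum t) : Deriv AX (.pre none t) t := by
  induction ht with
  | single _ => exact deriv_pre_tau none _
  | plus _ _ iht ihu =>
    exact .trans (.pre none (.plus iht.symm ihu.symm))
      (.trans (.ax (.WIF1 none _ _)) (.plus iht ihu))

theorem TauSum.exists_pre {t : Tm A V} (ht : TauSum t) (a : A) :
    ∃ u, NoTau u ∧ Deriv AX (.pre (some a) t) u := by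
  induction ht with
  | @single s hs => exact ⟨.pre (some a) s, hs, deriv_pre_tau _ _⟩
  | plus ht hu iht ihu =>
    obtain ⟨t', ht', dt⟩ := iht
    obtain ⟨u', hu', du⟩ := ihu
    -- WIF1 needs both summands to be τ-prefixes, which `tau_absorb` provides.
    exact ⟨.plus t' u', ⟨ht', hu'⟩,
      .trans (.pre _ (.plus ht.tau_absorb.symm hu.tau_absorb.symm))
        (.trans (.ax (.WIF1 _ _ _)) (.plus dt du))⟩

theorem TauSum.exists_plus {t s : Tm A V} (ht : TauSum t) (hs : NoTau s) :
    ∃ u, TauSum u ∧ Deriv AX (.plus t s) u := by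
  induction ht with
  | @single x hx =>
    exact ⟨_, .plus (.single hx) (.single (s := .plus x s) ⟨hx, hs⟩), .ax (.WIF2 x s)⟩
  | plus ht hu iht ihu =>
    -- It suffices to absorb `s` into one of the two summands.
    obtain ⟨u', hu', du⟩ := ihu
    exact ⟨_, .plus ht hu', .trans (.ax (.A2 _ _ _)) (.plus (.refl _) du)⟩

theorem exists_normalForm (t : Tm A V) :
    (∃ s, NoTau s ∧ Deriv AX t s) ∨
      ((∃ t', Step t none t') ∧ ∃ u, TauSum u ∧ Deriv AX t u) := by
  induction t with
  | nil => exact .inl ⟨.nil, trivial, .refl _⟩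
  | var x => exact .inl ⟨.var x, trivial, .refl _⟩
  | plus t u iht ihu =>
    rcases iht with ⟨s, hs, ds⟩ | ⟨⟨t', st⟩, v, hv, dv⟩ <;>
      rcases ihu with ⟨s', hs', ds'⟩ | ⟨⟨u', su⟩, v', hv', dv'⟩
    · exact .inl ⟨.plus s s', ⟨hs, hs'⟩, .plus ds ds'⟩
    · obtain ⟨w, hw, dw⟩ := hv'.exists_plus hs
      exact .inr ⟨⟨u', .plusR t su⟩, w, hw,
        .trans (.plus ds dv') (.trans (.ax (.A1 _ _)) dw)⟩
    · obtain ⟨w, hw, dw⟩ := hv.exists_plus hs'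
      exact .inr ⟨⟨t', .plusL u st⟩, w, hw, .trans (.plus dv ds') dw⟩
    · exact .inr ⟨⟨t', .plusL u st⟩, .plus v v', .plus hv hv', .plus dv dv'⟩
  | pre α t ih =>
    cases α with
    | none =>
      refine .inr ⟨⟨t, .pre none t⟩, ?_⟩
      rcases ih with ⟨s, hs, ds⟩ | ⟨-, v, hv, dv⟩
      · exact ⟨_, .single hs, .pre none ds⟩
      · exact ⟨v, hv, .trans (.pre none dv) hv.tau_absorb⟩
    | some a =>
      refine .inl ?_
      rcases ih with ⟨s, hs, ds⟩ | ⟨-, v, hv, dv⟩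
      · exact ⟨.pre (some a) s, hs, .pre _ ds⟩
      · obtain ⟨w, hw, dw⟩ := hv.exists_pre a
        exact ⟨w, hw, .trans (.pre _ dv) dw⟩

end Tm

/-- every BCCS term without a τ-transition can be proved equal,
from A1-4 + WIF1 + WIF2, to a BCCSP term (a term with no τ prefix). -/
theorem stmt2 {A V : Type} (t : Tm A V) (h : ¬ ∃ t', Tm.Step t none t') :
    ∃ t' : Tm A V, Tm.NoTau t' ∧ Tm.Deriv Tm.AX t t' :=
  (Tm.exists_normalForm t).resolve_right fun hr => h hr.1
end

section
/- Let init-τ be the map on BCCSP terms defined by init-τ(0)=0, init-τ(t+u)=init-τ(t)+init-τ(u), init-τ(at)=τt, init-τ(x)=x. If t is a safe BCCSP term (no variable occurs both initially and non-initially in t) and σ is a substitution, then init-τ(σ(t)) = σ'(init-τ(t)), where σ'(x)=init-τ(σ(x)) if x occurs initially in t and σ'(x)=σ(x) otherwise. -/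
attribute [local instance] Classical.propDecidable

namespace Tm

theorem subst_congr {A V : Type} {σ ρ : V → Tm A V} (t : Tm A V)
    (h : ∀ x ∈ vars t, σ x = ρ x) : subst σ t = subst ρ t := by
  induction t with
  | nil => rfl
  | var x => exact h x rfl
  | plus t u iht ihu =>
    simp only [subst]
    rw [iht fun x hx => h x (Or.inl hx), ihu fun x hx => h x (Or.inr hx)]
  | pre α t ih =>
    simp only [subst]
    rw [ih h]

theorem initTau_subst {A V : Type} (σ : V → Tm A V) (I : Set V) (t : Tm A V)
    (hI : ∀ x ∈ initVars t, x ∈ I) (hD : ∀ x ∈ deepVars t, x ∉ I) :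
    initTau (subst σ t) =
      subst (fun x => if x ∈ I then initTau (σ x) else σ x) (initTau t) := by
  induction t with
  | nil => rfl
  | var x =>
    have hx : x ∈ I := hI x rfl
    simp [subst, initTau, hx]
  | plus t u iht ihu =>
    simp only [subst, initTau]
    rw [iht (fun x hx => hI x (Or.inl hx)) (fun x hx => hD x (Or.inl hx)),
      ihu (fun x hx => hI x (Or.inr hx)) (fun x hx => hD x (Or.inr hx))]
  | pre α t _ =>
    simp only [subst, initTau]
    rw [subst_congr t fun x hx => (if_neg (hD x hx)).symm]

end Tm

/-- if `σ(t)` is a BCCSP term and `t` is safe, then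
`init-τ(σ(t)) = σ'(init-τ(t))` where `σ'` applies `init-τ` to the variables
occurring initially in `t`. -/
theorem stmt4 {A V : Type} (t : Tm A V) (σ : V → Tm A V)
    (hP : Tm.NoTau (Tm.subst σ t)) (hs : Tm.Safe t) :
    Tm.initTau (Tm.subst σ t) =
      Tm.subst (fun x => if x ∈ Tm.initVars t then Tm.initTau (σ x) else σ x)
        (Tm.initTau t) := by
  exact Tm.initTau_subst σ (Tm.initVars t) t (fun _ hx => hx) fun x hd hi =>
    (Set.ext_iff.mp hs x).mp ⟨hi, hd⟩
end
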